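/- arXiv:1507.03329 — 2 statements merged into one kernel-verified Lean document; each statement's English description precedes it below -/
import Mathlib

section
/- Let 𝒞 be an idempotent complete additive category, and let ℰ be a collection of objects of 𝒞 that is closed under isomorphisms, closed under finite coproducts, and closed under taking summands (i.e., whenever X is an object of 𝒞 such that id_X factors through an object of ℰ, then X belongs to ℰ). Then for objects X and Y of 𝒞, the following are equivalent: (i) there exist morphisms f : X → Y and g : Y → X such that id_X − g∘f factors through an object of ℰ and id_Y − f∘g factors through an object of ℰ (i.e., X and Y become isomorphic in the quotient of 𝒞 by the morphisms factoring through objects of ℰ); (ii) there exist objects E_X and E_Y in ℰ such that X ⊕ E_X ≅ Y ⊕ E_Y in 𝒞. -/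
open CategoryTheory CategoryTheory.Limits

universe v u

/-- A morphism factors through an object belonging to the collection `E`. -/
def FactorsThruSet {C : Type u} [Category.{v} C] (E : Set C) {X Y : C} (φ : X ⟶ Y) : Prop :=
  ∃ Z ∈ E, ∃ (u : X ⟶ Z) (v : Z ⟶ Y), u ≫ v = φ

attribute [local instance] CategoryTheory.Limits.hasBinaryBiproducts_of_finite_biproducts

/-! If `𝟙 X - f ≫ g` is a composite `u ≫ v` through `Z ∈ E`, then `(f, u) : X ⟶ Y ⊞ Z` is a
section of `(g, v) : Y ⊞ Z ⟶ X`, so by idempotent completeness `Y ⊞ Z ≅ ker (g, v) ⊞ X`. Modulo `E`,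
the object `Z` vanishes and `g` is invertible, so the inclusion of `ker (g, v)` vanishes; as this
inclusion is split, `ker (g, v)` is a summand of an object of `E`.

Conversely, for an isomorphism `X ⊞ W ≅ Y ⊞ Z` with `W, Z ∈ E`, the round trip `X ⟶ Y ⟶ X` through
its `Y`-components differs from `𝟙 X` by the round trip through `Z`. -/

section SplitEpi

variable {C : Type u} [Category.{v} C] [Preadditive C] {X Y : C} (f : X ⟶ Y) [IsSplitEpi f]

theorem hasKernel_of_isSplitEpi [IsIdempotentComplete C] : HasKernel f := by
  have : HasKernel (f ≫ section_ f) :=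
    Idempotents.isIdempotentComplete_iff_idempotents_have_kernels C |>.mp inferInstance _ _
      (by simp)
  have kernel_ι_comp : kernel.ι (f ≫ section_ f) ≫ f = 0 := by
    simp [← cancel_mono (section_ f)]
  exact ⟨⟨⟨_, isKernelOfComp _ _ (kernelIsKernel (f ≫ section_ f)) kernel_ι_comp rfl⟩⟩⟩

theorem isSplitMono_kernel_ι_of_isSplitEpi [HasKernel f] : IsSplitMono (kernel.ι f) :=
  ⟨⟨_, (binaryBiconeOfIsSplitEpiOfKernel (kernelIsKernel f)).inl_fst⟩⟩

/-- The splitting lemma: the source of a split epimorphism is the biproduct of its kernel and its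
target. -/
noncomputable def isoKernelBiprodOfIsSplitEpi [HasKernel f] [HasBinaryBiproduct (kernel f) Y] :
    X ≅ kernel f ⊞ Y :=
  biprod.uniqueUpToIso (kernel f) Y (isBilimitBinaryBiconeOfIsSplitEpiOfKernel (kernelIsKernel f))

end SplitEpi

namespace FactorsThruSet

variable {C : Type u} [Category.{v} C] {E : Set C}

theorem comp_left {X Y Z : C} {φ : Y ⟶ Z} (hφ : FactorsThruSet E φ) (α : X ⟶ Y) :
    FactorsThruSet E (α ≫ φ) := by
  obtain ⟨A, hA, u, v, rfl⟩ := hφ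
  exact ⟨A, hA, α ≫ u, v, Category.assoc _ _ _⟩

theorem comp_right {X Y Z : C} {φ : X ⟶ Y} (hφ : FactorsThruSet E φ) (α : Y ⟶ Z) :
    FactorsThruSet E (φ ≫ α) := by
  obtain ⟨A, hA, u, v, rfl⟩ := hφ
  exact ⟨A, hA, u, v ≫ α, (Category.assoc _ _ _).symm⟩

variable [Preadditive C]

theorem id_sub_of_comp_eq_id {X Y Z : C} [HasBinaryBiproduct Y Z] (hZ : Z ∈ E)
    {s : X ⟶ Y ⊞ Z} {r : Y ⊞ Z ⟶ X} (hsr : s ≫ r = 𝟙 X) :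
    FactorsThruSet E (𝟙 X - (s ≫ biprod.fst) ≫ biprod.inl ≫ r) := by
  refine ⟨Z, hZ, s ≫ biprod.snd, biprod.inr ≫ r, eq_sub_of_add_eq' ?_⟩
  calc (s ≫ biprod.fst) ≫ biprod.inl ≫ r + (s ≫ biprod.snd) ≫ biprod.inr ≫ r
      = s ≫ (biprod.fst ≫ biprod.inl + biprod.snd ≫ biprod.inr) ≫ r := by
        simp only [Preadditive.add_comp, Preadditive.comp_add, Category.assoc]
    _ = 𝟙 X := by rw [biprod.total, Category.id_comp, hsr]

variable [HasBinaryBiproducts C]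

theorem add (hE : ∀ A B : C, A ∈ E → B ∈ E → (A ⊞ B) ∈ E) {X Y : C} {φ ψ : X ⟶ Y}
    (hφ : FactorsThruSet E φ) (hψ : FactorsThruSet E ψ) : FactorsThruSet E (φ + ψ) := by
  obtain ⟨A, hA, u, v, rfl⟩ := hφ
  obtain ⟨B, hB, s, t, rfl⟩ := hψ
  exact ⟨A ⊞ B, hE A B hA hB, biprod.lift u s, biprod.desc v t, biprod.lift_desc⟩

theorem of_comp_desc_eq_zero (hE : ∀ A B : C, A ∈ E → B ∈ E → (A ⊞ B) ∈ E) {W X Y Z : C}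
    (hZ : Z ∈ E) {f : X ⟶ Y} {g : Y ⟶ X} (hgf : FactorsThruSet E (𝟙 Y - g ≫ f)) {v : Z ⟶ X}
    {i : W ⟶ Y ⊞ Z} (hi : i ≫ biprod.desc g v = 0) : FactorsThruSet E i := by
  have fst_comp_g : i ≫ biprod.fst ≫ g = -(i ≫ biprod.snd ≫ v) := by
    rw [biprod.desc_eq, Preadditive.comp_add] at hi
    exact eq_neg_of_add_eq_zero_left hi
  have i_eq : i = (i ≫ biprod.fst) ≫ (𝟙 Y - g ≫ f) ≫ biprod.inl +
      (i ≫ biprod.snd) ≫ (biprod.inr - v ≫ f ≫ biprod.inl) := by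
    apply biprod.hom_ext <;> simp [reassoc_of% fst_comp_g]
  rw [i_eq]
  exact add hE ((hgf.comp_right _).comp_left _) ⟨Z, hZ, _, _, rfl⟩

end FactorsThruSet

/-- In an idempotent complete additive category `C`, if a collection of objects `E` is
closed under isomorphisms, finite coproducts and summands, then two objects `X`, `Y`
become isomorphic in the quotient of `C` by the morphisms factoring through objects of
`E` if and only if `X ⊕ E_X ≅ Y ⊕ E_Y` for some `E_X, E_Y ∈ E`. -/
theorem iso_in_quotient_iff_biprod_iso
    {C : Type u} [Category.{v} C] [Preadditive C] [HasFiniteBiproducts C]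
    [IsIdempotentComplete C] (E : Set C)
    (hiso : ∀ X Y : C, X ∈ E → Nonempty (X ≅ Y) → Y ∈ E)
    (hzero : ∀ Z : C, IsZero Z → Z ∈ E)
    (hcoprod : ∀ X Y : C, X ∈ E → Y ∈ E → (X ⊞ Y) ∈ E)
    (hsummand : ∀ X : C, FactorsThruSet E (𝟙 X) → X ∈ E)
    (X Y : C) :
    (∃ (f : X ⟶ Y) (g : Y ⟶ X),
        FactorsThruSet E (𝟙 X - f ≫ g) ∧ FactorsThruSet E (𝟙 Y - g ≫ f)) ↔
      ∃ EX ∈ E, ∃ EY ∈ E, Nonempty ((X ⊞ EX) ≅ (Y ⊞ EY)) := by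
  constructor
  · rintro ⟨f, g, ⟨Z, hZ, u, v, huv⟩, hgf⟩
    let r : Y ⊞ Z ⟶ X := biprod.desc g v
    have : IsSplitEpi r := ⟨⟨biprod.lift f u, by simp [r, huv]⟩⟩
    have : HasKernel r := hasKernel_of_isSplitEpi r
    have : IsSplitMono (kernel.ι r) := isSplitMono_kernel_ι_of_isSplitEpi r
    have hι : FactorsThruSet E (kernel.ι r) :=
      .of_comp_desc_eq_zero hcoprod hZ hgf (kernel.condition r)
    have hK : kernel r ∈ E :=
      hsummand _ (IsSplitMono.id (kernel.ι r) ▸ hι.comp_right (retraction (kernel.ι r)))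
    exact ⟨kernel r, hK, Z, hZ, ⟨biprod.braiding _ _ ≪≫ (isoKernelBiprodOfIsSplitEpi r).symm⟩⟩
  · rintro ⟨EX, hEX, EY, hEY, ⟨e⟩⟩
    refine ⟨biprod.inl ≫ e.hom ≫ biprod.fst, biprod.inl ≫ e.inv ≫ biprod.fst, ?_, ?_⟩
    · simpa using FactorsThruSet.id_sub_of_comp_eq_id hEY
        (s := biprod.inl ≫ e.hom) (r := e.inv ≫ biprod.fst) (by simp)
    · simpa using FactorsThruSet.id_sub_of_comp_eq_id hEX
        (s := biprod.inl ≫ e.inv) (r := e.hom ≫ biprod.fst) (by simp)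
end

section
/- Let k be a field, let Q and Q′ be commutative k-algebras, and let f ∈ Q, f′ ∈ Q′. Let P = (P₁, P₀, d₁, d₀) be a matrix factorization of f over Q and P′ = (P₁′, P₀′, d₁′, d₀′) a matrix factorization of f′ over Q′. Then the pair of Q ⊗_k Q′-modules ((P₁ ⊗_k P₀′) ⊕ (P₀ ⊗_k P₁′), (P₀ ⊗_k P₀′) ⊕ (P₁ ⊗_k P₁′)), equipped with the maps given in block form by D₁ = [[d₁ ⊗ id_{P₀′}, id_{P₀} ⊗ d₁′], [−id_{P₁} ⊗ d₀′, d₀ ⊗ id_{P₁′}]] from the first module to the second, and D₀ = [[d₀ ⊗ id_{P₀′}, −id_{P₁} ⊗ d₁′], [id_{P₀} ⊗ d₀′, d₁ ⊗ id_{P₁′}]] from the second module to the first, is a matrix factorization of f ⊗ 1 + 1 ⊗ f′ over Q ⊗_k Q′; in particular, both modules are finitely generated projective over Q ⊗_k Q′ and D₁∘D₀ = (f ⊗ 1 + 1 ⊗ f′)·id and D₀∘D₁ = (f ⊗ 1 + 1 ⊗ f′)·id. -/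
open TensorProduct

universe u

section

variable (k : Type u) [Field k]
variable (Q : Type u) [CommRing Q] [Algebra k Q] (Q' : Type u) [CommRing Q'] [Algebra k Q']
variable (P1 P0 : Type u) [AddCommGroup P1] [AddCommGroup P0]
  [Module k P1] [Module k P0] [Module Q P1] [Module Q P0]
  [IsScalarTower k Q P1] [IsScalarTower k Q P0]
variable (P1' P0' : Type u) [AddCommGroup P1'] [AddCommGroup P0']
  [Module k P1'] [Module k P0'] [Module Q' P1'] [Module Q' P0']
  [IsScalarTower k Q' P1'] [IsScalarTower k Q' P0']
variable (d1 : P1 →ₗ[Q] P0) (d0 : P0 →ₗ[Q] P1)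
variable (d1' : P1' →ₗ[Q'] P0') (d0' : P0' →ₗ[Q'] P1')

/-- The odd-to-even differential of the tensor product of two matrix factorizations, as a
`k`-linear map: in block form `[[d₁ ⊗ id, id ⊗ d₁'], [-id ⊗ d₀', d₀ ⊗ id]]`. -/
noncomputable def mfTensorD1 :
    (P1 ⊗[k] P0') × (P0 ⊗[k] P1') →ₗ[k] (P0 ⊗[k] P0') × (P1 ⊗[k] P1') :=
  LinearMap.prod
    ((TensorProduct.map (d1.restrictScalars k) (LinearMap.id : P0' →ₗ[k] P0')) ∘ₗ
        LinearMap.fst k (P1 ⊗[k] P0') (P0 ⊗[k] P1') +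
      (TensorProduct.map (LinearMap.id : P0 →ₗ[k] P0) (d1'.restrictScalars k)) ∘ₗ
        LinearMap.snd k (P1 ⊗[k] P0') (P0 ⊗[k] P1'))
    ((-(TensorProduct.map (LinearMap.id : P1 →ₗ[k] P1) (d0'.restrictScalars k))) ∘ₗ
        LinearMap.fst k (P1 ⊗[k] P0') (P0 ⊗[k] P1') +
      (TensorProduct.map (d0.restrictScalars k) (LinearMap.id : P1' →ₗ[k] P1')) ∘ₗ
        LinearMap.snd k (P1 ⊗[k] P0') (P0 ⊗[k] P1'))

/-- The even-to-odd differential of the tensor product of two matrix factorizations, as a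
`k`-linear map: in block form `[[d₀ ⊗ id, -id ⊗ d₁'], [id ⊗ d₀', d₁ ⊗ id]]`. -/
noncomputable def mfTensorD0 :
    (P0 ⊗[k] P0') × (P1 ⊗[k] P1') →ₗ[k] (P1 ⊗[k] P0') × (P0 ⊗[k] P1') :=
  LinearMap.prod
    ((TensorProduct.map (d0.restrictScalars k) (LinearMap.id : P0' →ₗ[k] P0')) ∘ₗ
        LinearMap.fst k (P0 ⊗[k] P0') (P1 ⊗[k] P1') +
      (-(TensorProduct.map (LinearMap.id : P1 →ₗ[k] P1) (d1'.restrictScalars k))) ∘ₗ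
        LinearMap.snd k (P0 ⊗[k] P0') (P1 ⊗[k] P1'))
    ((TensorProduct.map (LinearMap.id : P0 →ₗ[k] P0) (d0'.restrictScalars k)) ∘ₗ
        LinearMap.fst k (P0 ⊗[k] P0') (P1 ⊗[k] P1') +
      (TensorProduct.map (d1.restrictScalars k) (LinearMap.id : P1' →ₗ[k] P1')) ∘ₗ
        LinearMap.snd k (P0 ⊗[k] P0') (P1 ⊗[k] P1'))

/-!
A family spanning `M` over `A` and one spanning `N` over `B` tensor to a family spanning `M ⊗ N`
over `A ⊗ B`, and sections of the corresponding presentations tensor to a section; hence finiteness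
and projectivity pass to tensor products. In the products of the block matrices, the diagonal
entries are `d² ⊗ 1 + 1 ⊗ d'² = f ⊗ 1 + 1 ⊗ f'`, while the off-diagonal ones cancel because `d ⊗ 1`
and `1 ⊗ d'` commute and occur there with opposite signs.
-/

/-- The `A ⊗[R] B`-module structure on `M ⊗[R] N` is the canonical one of the external tensor
product of an `A`-module and a `B`-module. It is a predicate on a given structure because Mathlib
has no such instance. -/
class IsExternalTensor (R A B M N : Type*) [CommSemiring R] [Semiring A] [Semiring B]
    [Algebra R A] [Algebra R B] [AddCommMonoid M] [AddCommMonoid N] [Module R M] [Module R N]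
    [Module A M] [Module B N] [Module (A ⊗[R] B) (M ⊗[R] N)] : Prop where
  tmul_smul_tmul (a : A) (b : B) (m : M) (n : N) :
    (a ⊗ₜ[R] b) • (m ⊗ₜ[R] n) = (a • m) ⊗ₜ[R] (b • n)

namespace IsExternalTensor

section Basic

variable {R A B M N : Type*} [CommSemiring R] [Semiring A] [Semiring B]
  [Algebra R A] [Algebra R B]
  [AddCommMonoid M] [Module R M] [Module A M] [AddCommMonoid N] [Module R N] [Module B N]
  [Module (A ⊗[R] B) (M ⊗[R] N)] [IsExternalTensor R A B M N]

/-- An `R`-linear map out of an external tensor product, promoted to an `A ⊗[R] B`-linear one. -/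
def extendScalars {P : Type*} [AddCommMonoid P] [Module R P] [Module (A ⊗[R] B) P]
    (φ : M ⊗[R] N →ₗ[R] P)
    (hφ : ∀ (a : A) (b : B) (m : M) (n : N),
      φ ((a • m) ⊗ₜ[R] (b • n)) = (a ⊗ₜ[R] b) • φ (m ⊗ₜ[R] n)) :
    M ⊗[R] N →ₗ[A ⊗[R] B] P where
  toFun := φ
  map_add' := map_add φ
  map_smul' r x := by
    induction x using TensorProduct.induction_on with
    | zero => simp
    | add x y hx hy => simp_all [smul_add]
    | tmul m n =>
      induction r using TensorProduct.induction_on with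
      | zero => simp
      | add r s hr hs => simp_all [add_smul]
      | tmul a b => simp [tmul_smul_tmul, hφ]

theorem linearCombination_finsuppTensorFinsupp {ι κ : Type*} (v : ι → M) (w : κ → N)
    (f : ι →₀ A) (g : κ →₀ B) :
    Finsupp.linearCombination (A ⊗[R] B) (fun p : ι × κ ↦ v p.1 ⊗ₜ[R] w p.2)
        (finsuppTensorFinsupp R R A B ι κ (f ⊗ₜ[R] g)) =
      Finsupp.linearCombination A v f ⊗ₜ[R] Finsupp.linearCombination B w g := by
  induction f using Finsupp.induction_linear with
  | zero => simp
  | add f₁ f₂ h₁ h₂ => simp only [TensorProduct.add_tmul, map_add, h₁, h₂]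
  | single i a =>
    induction g using Finsupp.induction_linear with
    | zero => simp
    | add g₁ g₂ h₁ h₂ => simp only [TensorProduct.tmul_add, map_add, h₁, h₂]
    | single j b => simp [tmul_smul_tmul]

theorem span_range_tmul_eq_top {ι κ : Type*} {v : ι → M} {w : κ → N}
    (hv : Submodule.span A (Set.range v) = ⊤) (hw : Submodule.span B (Set.range w) = ⊤) :
    Submodule.span (A ⊗[R] B) (Set.range fun p : ι × κ ↦ v p.1 ⊗ₜ[R] w p.2) = ⊤ := by
  rw [← Finsupp.range_linearCombination, LinearMap.range_eq_top] at hv hw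
  rw [Submodule.eq_top_iff']
  intro x
  induction x using TensorProduct.induction_on with
  | zero => exact zero_mem _
  | add x y hx hy => exact add_mem hx hy
  | tmul m n =>
    obtain ⟨f, rfl⟩ := hv m
    obtain ⟨g, rfl⟩ := hw n
    rw [← linearCombination_finsuppTensorFinsupp, ← Finsupp.range_linearCombination]
    exact LinearMap.mem_range_self _ _

variable (R A B M N)

theorem finite [Module.Finite A M] [Module.Finite B N] :
    Module.Finite (A ⊗[R] B) (M ⊗[R] N) := by
  obtain ⟨_, v, hv⟩ := Module.Finite.exists_fin (R := A) (M := M)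
  obtain ⟨_, w, hw⟩ := Module.Finite.exists_fin (R := B) (M := N)
  exact ⟨span_range_tmul_eq_top (R := R) hv hw ▸ Submodule.fg_span (Set.finite_range _)⟩

/-- Sections `s` of `(M →₀ A) → M` and `t` of `(N →₀ B) → N` tensor to a section of
`(M × N →₀ A ⊗ B) → M ⊗ N`. -/
theorem projective [IsScalarTower R A M] [IsScalarTower R B N]
    [Module.Projective A M] [Module.Projective B N] :
    Module.Projective (A ⊗[R] B) (M ⊗[R] N) := by
  obtain ⟨s, hs⟩ := Module.projective_def'.mp ‹Module.Projective A M›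
  obtain ⟨t, ht⟩ := Module.projective_def'.mp ‹Module.Projective B N›
  let σ : M ⊗[R] N →ₗ[A ⊗[R] B] M × N →₀ A ⊗[R] B :=
    extendScalars (finsuppTensorFinsupp R R A B M N ∘ₗ
      TensorProduct.map (s.restrictScalars R) (t.restrictScalars R)) fun a b m n ↦ by
        ext ⟨i, j⟩
        simp
  refine .of_split σ (Finsupp.linearCombination _ fun p ↦ p.1 ⊗ₜ p.2) (LinearMap.ext fun x ↦ ?_)
  induction x using TensorProduct.induction_on with
  | zero => simp
  | add x y hx hy => rw [map_add, hx, hy, map_add]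
  | tmul m n =>
    have hsm : Finsupp.linearCombination A id (s m) = m := LinearMap.congr_fun hs m
    have htn : Finsupp.linearCombination B id (t n) = n := LinearMap.congr_fun ht n
    calc
      _ = Finsupp.linearCombination A id (s m) ⊗ₜ[R] Finsupp.linearCombination B id (t n) :=
        linearCombination_finsuppTensorFinsupp id id (s m) (t n)
      _ = m ⊗ₜ[R] n := by rw [hsm, htn]

end Basic

section Map

variable {R A B M N M' N' : Type*} [CommSemiring R] [Semiring A] [Semiring B]
  [Algebra R A] [Algebra R B]
  [AddCommMonoid M] [Module R M] [Module A M] [IsScalarTower R A M]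
  [AddCommMonoid N] [Module R N] [Module B N] [IsScalarTower R B N]
  [AddCommMonoid M'] [Module R M'] [Module A M'] [IsScalarTower R A M']
  [AddCommMonoid N'] [Module R N'] [Module B N'] [IsScalarTower R B N']
  [Module (A ⊗[R] B) (M ⊗[R] N)] [IsExternalTensor R A B M N]
  [Module (A ⊗[R] B) (M' ⊗[R] N')] [IsExternalTensor R A B M' N']

variable (R) in
/-- The external tensor product `u ⊗ v` of two linear maps, as an `A ⊗[R] B`-linear map. -/
def tensorMap (u : M →ₗ[A] M') (v : N →ₗ[B] N') : M ⊗[R] N →ₗ[A ⊗[R] B] M' ⊗[R] N' :=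
  extendScalars (TensorProduct.map (u.restrictScalars R) (v.restrictScalars R))
    fun a b m n ↦ by simp [tmul_smul_tmul]

@[simp]
theorem tensorMap_tmul (u : M →ₗ[A] M') (v : N →ₗ[B] N') (m : M) (n : N) :
    tensorMap R u v (m ⊗ₜ n) = u m ⊗ₜ v n :=
  rfl

variable
  [Module (A ⊗[R] B) (M' ⊗[R] N)] [IsExternalTensor R A B M' N]
  [Module (A ⊗[R] B) (M ⊗[R] N')] [IsExternalTensor R A B M N']

theorem tensorMap_left_right_comm (u : M →ₗ[A] M') (v : N →ₗ[B] N') (x : M ⊗[R] N) :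
    tensorMap R u (.id : N' →ₗ[B] N') (tensorMap R (.id : M →ₗ[A] M) v x) =
      tensorMap R (.id : M' →ₗ[A] M') v (tensorMap R u (.id : N →ₗ[B] N) x) := by
  induction x using TensorProduct.induction_on with
  | zero => simp
  | add x y hx hy => simp only [map_add, hx, hy]
  | tmul m n => simp

theorem tensorMap_left_tensorMap_left {u : M →ₗ[A] M'} {u' : M' →ₗ[A] M} {a : A}
    (h : ∀ m, u' (u m) = a • m) (x : M ⊗[R] N) :
    tensorMap R u' (.id : N →ₗ[B] N) (tensorMap R u (.id : N →ₗ[B] N) x) =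
      (a ⊗ₜ[R] (1 : B)) • x := by
  induction x using TensorProduct.induction_on with
  | zero => simp
  | add x y hx hy => simp only [map_add, smul_add, hx, hy]
  | tmul m n => simp [tmul_smul_tmul, h]

theorem tensorMap_right_tensorMap_right {v : N →ₗ[B] N'} {v' : N' →ₗ[B] N} {b : B}
    (h : ∀ n, v' (v n) = b • n) (x : M ⊗[R] N) :
    tensorMap R (.id : M →ₗ[A] M) v' (tensorMap R (.id : M →ₗ[A] M) v x) =
      ((1 : A) ⊗ₜ[R] b) • x := by
  induction x using TensorProduct.induction_on with
  | zero => simp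
  | add x y hx hy => simp only [map_add, smul_add, hx, hy]
  | tmul m n => simp [tmul_smul_tmul, h]

end Map

end IsExternalTensor

/-- `(M₁, M₀, d₁, d₀)` is a matrix factorization of `f`. The relations are stated pointwise so that
they make sense over a noncommutative ring, where `f • LinearMap.id` is not linear. -/
structure IsMatrixFactorization {A M₁ M₀ : Type*} [Ring A] [AddCommGroup M₁] [AddCommGroup M₀]
    [Module A M₁] [Module A M₀] (f : A) (d₁ : M₁ →ₗ[A] M₀) (d₀ : M₀ →ₗ[A] M₁) : Prop where
  finite_odd : Module.Finite A M₁
  projective_odd : Module.Projective A M₁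
  finite_even : Module.Finite A M₀
  projective_even : Module.Projective A M₀
  odd_even_apply : ∀ x, d₁ (d₀ x) = f • x
  even_odd_apply : ∀ x, d₀ (d₁ x) = f • x

section TensorProduct

open IsExternalTensor

variable {R A B M₁ M₀ N₁ N₀ : Type*} [CommRing R] [Ring A] [Ring B] [Algebra R A] [Algebra R B]
  [AddCommGroup M₁] [Module R M₁] [Module A M₁] [IsScalarTower R A M₁]
  [AddCommGroup M₀] [Module R M₀] [Module A M₀] [IsScalarTower R A M₀]
  [AddCommGroup N₁] [Module R N₁] [Module B N₁] [IsScalarTower R B N₁]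
  [AddCommGroup N₀] [Module R N₀] [Module B N₀] [IsScalarTower R B N₀]
  [Module (A ⊗[R] B) (M₁ ⊗[R] N₀)] [IsExternalTensor R A B M₁ N₀]
  [Module (A ⊗[R] B) (M₀ ⊗[R] N₁)] [IsExternalTensor R A B M₀ N₁]
  [Module (A ⊗[R] B) (M₀ ⊗[R] N₀)] [IsExternalTensor R A B M₀ N₀]
  [Module (A ⊗[R] B) (M₁ ⊗[R] N₁)] [IsExternalTensor R A B M₁ N₁]

namespace IsMatrixFactorization

variable (R) in
/-- The odd-to-even differential `[[d₁ ⊗ 1, 1 ⊗ e₁], [-1 ⊗ e₀, d₀ ⊗ 1]]` of the tensor product,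
as an `A ⊗[R] B`-linear map. -/
noncomputable def tensorOdd (d₁ : M₁ →ₗ[A] M₀) (d₀ : M₀ →ₗ[A] M₁) (e₁ : N₁ →ₗ[B] N₀)
    (e₀ : N₀ →ₗ[B] N₁) :
    (M₁ ⊗[R] N₀) × (M₀ ⊗[R] N₁) →ₗ[A ⊗[R] B] (M₀ ⊗[R] N₀) × (M₁ ⊗[R] N₁) :=
  ((tensorMap R d₁ .id).coprod (tensorMap R .id e₁)).prod
    ((-tensorMap R (.id : M₁ →ₗ[A] M₁) e₀).coprod (tensorMap R d₀ .id))

variable (R) in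
/-- The even-to-odd differential `[[d₀ ⊗ 1, -1 ⊗ e₁], [1 ⊗ e₀, d₁ ⊗ 1]]` of the tensor product,
as an `A ⊗[R] B`-linear map. -/
noncomputable def tensorEven (d₁ : M₁ →ₗ[A] M₀) (d₀ : M₀ →ₗ[A] M₁) (e₁ : N₁ →ₗ[B] N₀)
    (e₀ : N₀ →ₗ[B] N₁) :
    (M₀ ⊗[R] N₀) × (M₁ ⊗[R] N₁) →ₗ[A ⊗[R] B] (M₁ ⊗[R] N₀) × (M₀ ⊗[R] N₁) :=
  ((tensorMap R d₀ .id).coprod (-tensorMap R (.id : M₁ →ₗ[A] M₁) e₁)).prod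
    ((tensorMap R .id e₀).coprod (tensorMap R d₁ .id))

variable {f : A} {g : B} {d₁ : M₁ →ₗ[A] M₀} {d₀ : M₀ →ₗ[A] M₁} {e₁ : N₁ →ₗ[B] N₀}
  {e₀ : N₀ →ₗ[B] N₁}

theorem tensorOdd_apply (x : M₁ ⊗[R] N₀) (y : M₀ ⊗[R] N₁) :
    tensorOdd R d₁ d₀ e₁ e₀ (x, y) =
      (tensorMap R d₁ (.id : N₀ →ₗ[B] N₀) x + tensorMap R (.id : M₀ →ₗ[A] M₀) e₁ y,
        -tensorMap R (.id : M₁ →ₗ[A] M₁) e₀ x + tensorMap R d₀ (.id : N₁ →ₗ[B] N₁) y) :=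
  rfl

theorem tensorEven_apply (x : M₀ ⊗[R] N₀) (y : M₁ ⊗[R] N₁) :
    tensorEven R d₁ d₀ e₁ e₀ (x, y) =
      (tensorMap R d₀ (.id : N₀ →ₗ[B] N₀) x + -tensorMap R (.id : M₁ →ₗ[A] M₁) e₁ y,
        tensorMap R (.id : M₀ →ₗ[A] M₀) e₀ x + tensorMap R d₁ (.id : N₁ →ₗ[B] N₁) y) :=
  rfl

theorem tensorOdd_tensorEven_apply (hd₁₀ : ∀ m, d₁ (d₀ m) = f • m) (hd₀₁ : ∀ m, d₀ (d₁ m) = f • m)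
    (he₁₀ : ∀ n, e₁ (e₀ n) = g • n) (he₀₁ : ∀ n, e₀ (e₁ n) = g • n)
    (z : (M₀ ⊗[R] N₀) × (M₁ ⊗[R] N₁)) :
    tensorOdd R d₁ d₀ e₁ e₀ (tensorEven R d₁ d₀ e₁ e₀ z) =
      (f ⊗ₜ[R] (1 : B) + (1 : A) ⊗ₜ[R] g) • z := by
  obtain ⟨x, y⟩ := z
  simp only [tensorOdd_apply, tensorEven_apply, map_add, map_neg, tensorMap_left_right_comm,
    tensorMap_left_tensorMap_left hd₁₀, tensorMap_left_tensorMap_left hd₀₁,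
    tensorMap_right_tensorMap_right he₁₀, tensorMap_right_tensorMap_right he₀₁,
    Prod.smul_mk, add_smul]
  congr 1 <;> abel

theorem tensorEven_tensorOdd_apply (hd₁₀ : ∀ m, d₁ (d₀ m) = f • m) (hd₀₁ : ∀ m, d₀ (d₁ m) = f • m)
    (he₁₀ : ∀ n, e₁ (e₀ n) = g • n) (he₀₁ : ∀ n, e₀ (e₁ n) = g • n)
    (z : (M₁ ⊗[R] N₀) × (M₀ ⊗[R] N₁)) :
    tensorEven R d₁ d₀ e₁ e₀ (tensorOdd R d₁ d₀ e₁ e₀ z) =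
      (f ⊗ₜ[R] (1 : B) + (1 : A) ⊗ₜ[R] g) • z := by
  obtain ⟨x, y⟩ := z
  simp only [tensorEven_apply, tensorOdd_apply, map_add, map_neg, tensorMap_left_right_comm,
    tensorMap_left_tensorMap_left hd₁₀, tensorMap_left_tensorMap_left hd₀₁,
    tensorMap_right_tensorMap_right he₁₀, tensorMap_right_tensorMap_right he₀₁,
    Prod.smul_mk, add_smul]
  congr 1 <;> abel

end IsMatrixFactorization

open IsMatrixFactorization in
theorem mfTensor_is_matrix_factorization_general {f : A} {g : B}
    {d₁ : M₁ →ₗ[A] M₀} {d₀ : M₀ →ₗ[A] M₁} {e₁ : N₁ →ₗ[B] N₀} {e₀ : N₀ →ₗ[B] N₁}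
    (hd : IsMatrixFactorization f d₁ d₀) (he : IsMatrixFactorization g e₁ e₀) :
    IsMatrixFactorization (f ⊗ₜ[R] (1 : B) + (1 : A) ⊗ₜ[R] g)
      (tensorOdd R d₁ d₀ e₁ e₀) (tensorEven R d₁ d₀ e₁ e₀) := by
  obtain ⟨_, _, _, _, hd₁₀, hd₀₁⟩ := hd
  obtain ⟨_, _, _, _, he₁₀, he₀₁⟩ := he
  have := IsExternalTensor.finite R A B M₁ N₀
  have := IsExternalTensor.finite R A B M₀ N₁
  have := IsExternalTensor.finite R A B M₀ N₀
  have := IsExternalTensor.finite R A B M₁ N₁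
  have := IsExternalTensor.projective R A B M₁ N₀
  have := IsExternalTensor.projective R A B M₀ N₁
  have := IsExternalTensor.projective R A B M₀ N₀
  have := IsExternalTensor.projective R A B M₁ N₁
  exact ⟨inferInstance, inferInstance, inferInstance, inferInstance,
    tensorOdd_tensorEven_apply hd₁₀ hd₀₁ he₁₀ he₀₁,
    tensorEven_tensorOdd_apply hd₁₀ hd₀₁ he₁₀ he₀₁⟩

end TensorProduct

/-- **The tensor product of matrix factorizations.**  If `(P₁, P₀, d₁, d₀)` is a matrix
factorization of `f` over `Q` and `(P₁', P₀', d₁', d₀')` is a matrix factorization of `f'`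
over `Q'`, then `((P₁ ⊗ P₀') ⊕ (P₀ ⊗ P₁'), (P₀ ⊗ P₀') ⊕ (P₁ ⊗ P₁'))` with the block maps
`D₁`, `D₀` is a matrix factorization of `f ⊗ 1 + 1 ⊗ f'` over `Q ⊗[k] Q'`: the modules
are finitely generated projective, the maps are `Q ⊗[k] Q'`-linear, and they compose to
multiplication by `f ⊗ 1 + 1 ⊗ f'` both ways.  (Here the `Q ⊗[k] Q'`-module structures on
the tensor products are the canonical ones, characterized by
`(a ⊗ b) • (m ⊗ n) = (a • m) ⊗ (b • n)`.) -/
theorem mfTensor_is_matrix_factorization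
    (f : Q) (f' : Q')
    (hP1 : Module.Finite Q P1) (hP1p : Module.Projective Q P1)
    (hP0 : Module.Finite Q P0) (hP0p : Module.Projective Q P0)
    (hP1' : Module.Finite Q' P1') (hP1p' : Module.Projective Q' P1')
    (hP0' : Module.Finite Q' P0') (hP0p' : Module.Projective Q' P0')
    (h10 : d1 ∘ₗ d0 = f • LinearMap.id) (h01 : d0 ∘ₗ d1 = f • LinearMap.id)
    (h10' : d1' ∘ₗ d0' = f' • LinearMap.id) (h01' : d0' ∘ₗ d1' = f' • LinearMap.id)
    [Module (Q ⊗[k] Q') (P1 ⊗[k] P0')] [Module (Q ⊗[k] Q') (P0 ⊗[k] P1')]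
    [Module (Q ⊗[k] Q') (P0 ⊗[k] P0')] [Module (Q ⊗[k] Q') (P1 ⊗[k] P1')]
    (hsmul_a : ∀ (a : Q) (b : Q') (m : P1) (n : P0'),
      (a ⊗ₜ[k] b) • (m ⊗ₜ[k] n) = (a • m) ⊗ₜ[k] (b • n))
    (hsmul_b : ∀ (a : Q) (b : Q') (m : P0) (n : P1'),
      (a ⊗ₜ[k] b) • (m ⊗ₜ[k] n) = (a • m) ⊗ₜ[k] (b • n))
    (hsmul_c : ∀ (a : Q) (b : Q') (m : P0) (n : P0'),
      (a ⊗ₜ[k] b) • (m ⊗ₜ[k] n) = (a • m) ⊗ₜ[k] (b • n))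
    (hsmul_d : ∀ (a : Q) (b : Q') (m : P1) (n : P1'),
      (a ⊗ₜ[k] b) • (m ⊗ₜ[k] n) = (a • m) ⊗ₜ[k] (b • n)) :
    Module.Finite (Q ⊗[k] Q') ((P1 ⊗[k] P0') × (P0 ⊗[k] P1')) ∧
    Module.Projective (Q ⊗[k] Q') ((P1 ⊗[k] P0') × (P0 ⊗[k] P1')) ∧
    Module.Finite (Q ⊗[k] Q') ((P0 ⊗[k] P0') × (P1 ⊗[k] P1')) ∧
    Module.Projective (Q ⊗[k] Q') ((P0 ⊗[k] P0') × (P1 ⊗[k] P1')) ∧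
    (∀ (r : Q ⊗[k] Q') (x : (P1 ⊗[k] P0') × (P0 ⊗[k] P1')),
      mfTensorD1 k Q Q' P1 P0 P1' P0' d1 d0 d1' d0' (r • x) =
        r • mfTensorD1 k Q Q' P1 P0 P1' P0' d1 d0 d1' d0' x) ∧
    (∀ (r : Q ⊗[k] Q') (x : (P0 ⊗[k] P0') × (P1 ⊗[k] P1')),
      mfTensorD0 k Q Q' P1 P0 P1' P0' d1 d0 d1' d0' (r • x) =
        r • mfTensorD0 k Q Q' P1 P0 P1' P0' d1 d0 d1' d0' x) ∧
    (∀ x : (P0 ⊗[k] P0') × (P1 ⊗[k] P1'),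
      mfTensorD1 k Q Q' P1 P0 P1' P0' d1 d0 d1' d0'
          (mfTensorD0 k Q Q' P1 P0 P1' P0' d1 d0 d1' d0' x) =
        (f ⊗ₜ[k] (1 : Q') + (1 : Q) ⊗ₜ[k] f') • x) ∧
    (∀ x : (P1 ⊗[k] P0') × (P0 ⊗[k] P1'),
      mfTensorD0 k Q Q' P1 P0 P1' P0' d1 d0 d1' d0'
          (mfTensorD1 k Q Q' P1 P0 P1' P0' d1 d0 d1' d0' x) =
        (f ⊗ₜ[k] (1 : Q') + (1 : Q) ⊗ₜ[k] f') • x) := by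
  have : IsExternalTensor k Q Q' P1 P0' := ⟨hsmul_a⟩
  have : IsExternalTensor k Q Q' P0 P1' := ⟨hsmul_b⟩
  have : IsExternalTensor k Q Q' P0 P0' := ⟨hsmul_c⟩
  have : IsExternalTensor k Q Q' P1 P1' := ⟨hsmul_d⟩
  have hP : IsMatrixFactorization f d1 d0 :=
    ⟨hP1, hP1p, hP0, hP0p, LinearMap.congr_fun h10, LinearMap.congr_fun h01⟩
  have hP' : IsMatrixFactorization f' d1' d0' :=
    ⟨hP1', hP1p', hP0', hP0p', LinearMap.congr_fun h10', LinearMap.congr_fun h01'⟩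
  obtain ⟨finiteOdd, projectiveOdd, finiteEven, projectiveEven, oddEven, evenOdd⟩ :=
    mfTensor_is_matrix_factorization_general (R := k) hP hP'
  exact ⟨finiteOdd, projectiveOdd, finiteEven, projectiveEven,
    map_smul (IsMatrixFactorization.tensorOdd k d1 d0 d1' d0'),
    map_smul (IsMatrixFactorization.tensorEven k d1 d0 d1' d0'), oddEven, evenOdd⟩

end
end
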